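/- For every finite word w over {0,1}, the sequence k ↦ d k w converges as k → ∞ (so the asymptotic density d w = lim_{k→∞} d k w exists). -/

import Mathlib

open MeasureTheory Filter Topology
open scoped ENNReal

/-- `m`-fold concatenation of a word. -/
def wordPow (w : List ℕ) (m : ℕ) : List ℕ := (List.replicate m w).flatten

/-- The words of the generalized del Junco–Rudolph construction:
`B 0 = [0]`, `B (k+1) = (B k)^(a·b^k) ++ [1] ++ (B k)^((b-a)·b^k)`. -/
def Bword (b a : ℕ) : ℕ → List ℕ
  | 0 => [0]
  | k + 1 => wordPow (Bword b a k) (a * b ^ k) ++ [1] ++ wordPow (Bword b a k) ((b - a) * b ^ k)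

/-- The height sequence: `h 0 = 1`, `h (k+1) = b^(k+1) * h k + 1`. -/
def hseq (b : ℕ) : ℕ → ℕ
  | 0 => 1
  | k + 1 => b ^ (k + 1) * hseq b k + 1

/-- `w` occurs at position `i` in the periodic bi-infinite word `v^∞`. -/
def OccursPer (w v : List ℕ) (i : ℕ) : Prop :=
  ∀ r < w.length, v.getD ((i + r) % v.length) 0 = w.getD r 0

open Classical in
/-- `d k w`: the frequency of occurrences of `w` in the periodic word `(B k)^∞`. -/
noncomputable def dfreq (b a k : ℕ) (w : List ℕ) : ℝ :=
  (((Finset.range (hseq b k)).filter fun i => OccursPer w (Bword b a k) i).card : ℝ) /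
    (hseq b k : ℝ)

/-! Up to a cyclic rotation, which changes no frequency, `v ^ p ++ s ++ v ^ q` is
`v ^ (p + q) ++ s`. The periodic word of the latter agrees with `v^∞` on the block `v ^ (p + q)`, so
passing from `v` to the new word `u` moves the frequency of `w` by at most `(|w| + |s|) / |u|`.
For the words `B k` the spacer `s` is a single letter and the length is at least `b ^ k`, so these
bounds are summable and the frequencies form a Cauchy sequence. -/

section Count

variable {P Q : ℕ → Prop} [DecidablePred P] [DecidablePred Q]

theorem count_add_le (m n : ℕ) : (m + n).count P ≤ m.count P + n :=
  (Nat.count_add P m n).trans_le (Nat.add_le_add_left (Nat.count_le _) _)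

theorem count_congr {n : ℕ} (h : ∀ i < n, P i ↔ Q i) : n.count P = n.count Q :=
  le_antisymm (Nat.count_mono_left fun i hi => (h i hi).1)
    (Nat.count_mono_left fun i hi => (h i hi).2)

theorem count_shift_of_periodic {n : ℕ} (hP : Function.Periodic P n) (m : ℕ) :
    n.count (fun i => P (m + i)) = n.count P := by
  have hcount : m.count P + n.count (fun i => P (m + i)) = m.count P + n.count P := by
    rw [← Nat.count_add, Nat.count_add', count_congr fun i _ => iff_of_eq (hP i)]
  exact Nat.add_left_cancel hcount

theorem count_mul_of_periodic {n : ℕ} (hP : Function.Periodic P n) (m : ℕ) :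
    (m * n).count P = m * n.count P := by
  induction m with
  | zero => simp
  | succ m ih => rw [Nat.succ_mul, Nat.count_add, ih, count_shift_of_periodic hP, Nat.succ_mul]

end Count

theorem wordPow_succ (v : List ℕ) (m : ℕ) : wordPow v (m + 1) = v ++ wordPow v m := by
  simp [wordPow, List.replicate_succ]

theorem wordPow_add (v : List ℕ) (m n : ℕ) : wordPow v (m + n) = wordPow v m ++ wordPow v n := by
  rw [wordPow, List.replicate_add, List.flatten_append, wordPow, wordPow]

theorem length_wordPow (v : List ℕ) (m : ℕ) : (wordPow v m).length = m * v.length := by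
  simp [wordPow]

theorem getD_wordPow_append (v s : List ℕ) {m i : ℕ} (hi : i < m * v.length) :
    (wordPow v m ++ s).getD i 0 = v.getD (i % v.length) 0 := by
  induction m generalizing i with
  | zero => simp at hi
  | succ m ih =>
    rw [wordPow_succ, List.append_assoc]
    rcases lt_or_ge i v.length with h | h
    · rw [List.getD_append _ _ _ _ h, Nat.mod_eq_of_lt h]
    · rw [Nat.succ_mul] at hi
      rw [List.getD_append_right _ _ _ _ h, ih (by lia), Nat.mod_eq_sub_mod h]

/-- The letter at position `i ≥ 0` of the periodic word `v^∞`; it is `0` if `v` is empty. -/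
def periodicLetter (v : List ℕ) (i : ℕ) : ℕ := v.getD (i % v.length) 0

theorem periodicLetter_periodic (v : List ℕ) :
    Function.Periodic (periodicLetter v) v.length := fun i => by
  simp [periodicLetter]

theorem periodicLetter_rotate (v : List ℕ) (m i : ℕ) :
    periodicLetter (v.rotate m) i = periodicLetter v (m + i) := by
  rcases v.length.eq_zero_or_pos with hv | hv
  · simp [periodicLetter, List.length_eq_zero_iff.1 hv]
  · simp only [periodicLetter, List.length_rotate, List.getD_eq_getElem?_getD]
    rw [List.getElem?_rotate (Nat.mod_lt _ hv), Nat.mod_add_mod, add_comm]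

theorem periodicLetter_wordPow_append (v s : List ℕ) {m i : ℕ} (hi : i < m * v.length) :
    periodicLetter (wordPow v m ++ s) i = periodicLetter v i := by
  have hlt : i < (wordPow v m ++ s).length := by
    rw [List.length_append, length_wordPow]
    lia
  rw [periodicLetter, Nat.mod_eq_of_lt hlt, getD_wordPow_append v s hi, periodicLetter]

theorem occursPer_iff_periodicLetter {w v : List ℕ} {i : ℕ} :
    OccursPer w v i ↔ ∀ r < w.length, periodicLetter v (i + r) = w.getD r 0 :=
  Iff.rfl

theorem occursPer_periodic (w v : List ℕ) : Function.Periodic (OccursPer w v) v.length :=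
  fun i => by
    simp only [occursPer_iff_periodicLetter, add_right_comm i, periodicLetter_periodic v _]

theorem occursPer_rotate_iff {w v : List ℕ} {m i : ℕ} :
    OccursPer w (v.rotate m) i ↔ OccursPer w v (m + i) := by
  simp only [occursPer_iff_periodicLetter, periodicLetter_rotate, add_assoc]

theorem occursPer_wordPow_append_iff {w v s : List ℕ} {m i : ℕ}
    (hi : i + w.length ≤ m * v.length) :
    OccursPer w (wordPow v m ++ s) i ↔ OccursPer w v i :=
  forall₂_congr fun r hr => by
    rw [← periodicLetter, ← periodicLetter, periodicLetter_wordPow_append v s (by lia)]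

open Classical in
/-- The number of occurrences of `w` in `v^∞` that start in its first period; such an
occurrence may run past the end of the period. -/
noncomputable def occCount (w v : List ℕ) : ℕ := v.length.count (OccursPer w v)

theorem occCount_le_length (w v : List ℕ) : occCount w v ≤ v.length := by
  classical exact Nat.count_le _

theorem occCount_rotate (w v : List ℕ) (m : ℕ) : occCount w (v.rotate m) = occCount w v := by
  classical
  calc occCount w (v.rotate m)
      = v.length.count (fun i => OccursPer w v (m + i)) := by
        rw [occCount, List.length_rotate, count_congr fun _ _ => occursPer_rotate_iff]
    _ = occCount w v := count_shift_of_periodic (occursPer_periodic w v) m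

open Classical in
theorem count_occursPer_wordPow_append (w v s : List ℕ) (m : ℕ) :
    (m * v.length - w.length).count (OccursPer w (wordPow v m ++ s)) =
      (m * v.length - w.length).count (OccursPer w v) :=
  count_congr fun _ hi => occursPer_wordPow_append_iff (by lia)

theorem mul_occCount_le (w v s : List ℕ) (m : ℕ) :
    m * occCount w v ≤ occCount w (wordPow v m ++ s) + w.length := by
  classical
  calc m * occCount w v
      = (m * v.length).count (OccursPer w v) :=
        (count_mul_of_periodic (occursPer_periodic w v) m).symm
    _ ≤ (m * v.length - w.length + w.length).count (OccursPer w v) :=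
        Nat.count_monotone _ (by lia)
    _ ≤ (m * v.length - w.length).count (OccursPer w v) + w.length := count_add_le _ _
    _ = (m * v.length - w.length).count (OccursPer w (wordPow v m ++ s)) + w.length := by
        rw [count_occursPer_wordPow_append]
    _ ≤ occCount w (wordPow v m ++ s) + w.length := by
        gcongr
        refine Nat.count_monotone _ ?_
        rw [List.length_append, length_wordPow]
        lia

theorem occCount_wordPow_append_le (w v s : List ℕ) (m : ℕ) :
    occCount w (wordPow v m ++ s) ≤ m * occCount w v + (w.length + s.length) := by
  classical
  calc occCount w (wordPow v m ++ s)
      ≤ (m * v.length - w.length + (w.length + s.length)).count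
          (OccursPer w (wordPow v m ++ s)) := by
        refine Nat.count_monotone _ ?_
        rw [List.length_append, length_wordPow]
        lia
    _ ≤ (m * v.length - w.length).count (OccursPer w (wordPow v m ++ s)) +
          (w.length + s.length) := count_add_le _ _
    _ = (m * v.length - w.length).count (OccursPer w v) + (w.length + s.length) := by
        rw [count_occursPer_wordPow_append]
    _ ≤ (m * v.length).count (OccursPer w v) + (w.length + s.length) := by
        gcongr
        exact Nat.sub_le _ _
    _ = m * occCount w v + (w.length + s.length) := by
        rw [count_mul_of_periodic (occursPer_periodic w v), occCount]

/-- The frequency of `w` in the periodic word `v^∞`; it is `0` if `v` is empty. -/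
noncomputable def occFreq (w v : List ℕ) : ℝ := occCount w v / v.length

theorem occFreq_nonneg (w v : List ℕ) : 0 ≤ occFreq w v := by
  unfold occFreq
  positivity

theorem occFreq_le_one (w v : List ℕ) : occFreq w v ≤ 1 :=
  div_le_one_of_le₀ (mod_cast occCount_le_length w v) (Nat.cast_nonneg _)

theorem occFreq_mul_length (w v : List ℕ) : occFreq w v * v.length = occCount w v := by
  refine div_mul_cancel_of_imp fun hv => ?_
  have := occCount_le_length w v
  norm_cast at hv ⊢
  lia

theorem occFreq_rotate (w v : List ℕ) (m : ℕ) : occFreq w (v.rotate m) = occFreq w v := by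
  rw [occFreq, occFreq, occCount_rotate, List.length_rotate]

theorem abs_occFreq_wordPow_append_sub_le (w v s : List ℕ) (m : ℕ)
    (hne : wordPow v m ++ s ≠ []) :
    |occFreq w (wordPow v m ++ s) - occFreq w v| ≤
      (w.length + s.length) / (wordPow v m ++ s).length := by
  have hpos : (0 : ℝ) < (wordPow v m ++ s).length := mod_cast List.length_pos_iff.2 hne
  have hlower : (m * occCount w v : ℝ) ≤ occCount w (wordPow v m ++ s) + w.length :=
    mod_cast mul_occCount_le w v s m
  have hupper : (occCount w (wordPow v m ++ s) : ℝ) ≤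
      m * occCount w v + (w.length + s.length) :=
    mod_cast occCount_wordPow_append_le w v s m
  have hexpected : occFreq w v * (wordPow v m ++ s).length =
      m * occCount w v + occFreq w v * s.length := by
    rw [← occFreq_mul_length w v, List.length_append, length_wordPow]
    push_cast
    ring
  have hspacer : occFreq w v * s.length ≤ s.length :=
    mul_le_of_le_one_left (Nat.cast_nonneg _) (occFreq_le_one w v)
  have hspacer_nonneg : 0 ≤ occFreq w v * s.length :=
    mul_nonneg (occFreq_nonneg w v) (Nat.cast_nonneg _)
  rw [abs_le, ← neg_div, div_le_iff₀ hpos, le_div_iff₀ hpos, sub_mul, occFreq_mul_length,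
    hexpected]
  constructor <;> linarith

theorem abs_occFreq_wordPow_append_wordPow_sub_le (w v s : List ℕ) (p q : ℕ)
    (hne : wordPow v p ++ s ++ wordPow v q ≠ []) :
    |occFreq w (wordPow v p ++ s ++ wordPow v q) - occFreq w v| ≤
      (w.length + s.length) / (wordPow v p ++ s ++ wordPow v q).length := by
  have hrotate : (wordPow v p ++ s ++ wordPow v q).rotate (wordPow v p ++ s).length =
      wordPow v (q + p) ++ s := by
    rw [List.rotate_append_length_eq, wordPow_add, List.append_assoc]
  have hne' : wordPow v (q + p) ++ s ≠ [] := by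
    rwa [← hrotate, Ne, List.rotate_eq_nil_iff]
  have h := abs_occFreq_wordPow_append_sub_le w v s (q + p) hne'
  rwa [← hrotate, occFreq_rotate, List.length_rotate] at h

theorem exists_tendsto_occFreq_of_summable {V s : ℕ → List ℕ} {p q : ℕ → ℕ} (w : List ℕ)
    (hV : ∀ k, V (k + 1) = wordPow (V k) (p k) ++ s k ++ wordPow (V k) (q k))
    (hne : ∀ k, V k ≠ [])
    (hsum : Summable fun k => ((w.length + (s k).length) / (V (k + 1)).length : ℝ)) :
    ∃ L : ℝ, Tendsto (fun k => occFreq w (V k)) atTop (𝓝 L) := by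
  refine cauchySeq_tendsto_of_complete (cauchySeq_of_dist_le_of_summable _ (fun k => ?_) hsum)
  have hstep := hne (k + 1)
  rw [dist_comm, Real.dist_eq, Nat.succ_eq_add_one, hV k]
  rw [hV k] at hstep
  exact abs_occFreq_wordPow_append_wordPow_sub_le w (V k) (s k) (p k) (q k) hstep

theorem hseq_pos (b k : ℕ) : 0 < hseq b k := by
  cases k <;> simp [hseq]

theorem pow_le_hseq (b k : ℕ) : b ^ k ≤ hseq b k := by
  cases k with
  | zero => simp [hseq]
  | succ k => exact (Nat.le_mul_of_pos_right _ (hseq_pos b k)).trans (Nat.le_succ _)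

theorem summable_inv_hseq {b : ℕ} (hb : 2 ≤ b) : Summable fun k => (hseq b k : ℝ)⁻¹ := by
  have hgeom : Summable fun k : ℕ => ((b : ℝ) ^ k)⁻¹ := by
    simpa only [inv_pow] using summable_geometric_of_lt_one (by positivity : (0 : ℝ) ≤ (b : ℝ)⁻¹)
      (inv_lt_one_of_one_lt₀ (mod_cast hb))
  refine hgeom.of_nonneg_of_le (fun k => by positivity) fun k => ?_
  gcongr
  exact_mod_cast pow_le_hseq b k

theorem length_Bword {b a : ℕ} (hab : a ≤ b) (k : ℕ) : (Bword b a k).length = hseq b k := by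
  induction k with
  | zero => rfl
  | succ k ih =>
    obtain ⟨c, rfl⟩ := Nat.exists_eq_add_of_le hab
    simp only [Bword, hseq, List.length_append, length_wordPow, ih, List.length_singleton,
      Nat.add_sub_cancel_left]
    ring

theorem dfreq_eq_occFreq {b a : ℕ} (hab : a ≤ b) (k : ℕ) (w : List ℕ) :
    dfreq b a k w = occFreq w (Bword b a k) := by
  rw [dfreq, occFreq, occCount, length_Bword hab, Nat.count_eq_card_filter_range]

theorem dfreq_converges_general {b a : ℕ} (hb : 2 ≤ b) (hab : a ≤ b) (w : List ℕ) :
    ∃ L : ℝ, Tendsto (fun k => dfreq b a k w) atTop (𝓝 L) := by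
  have hne (k : ℕ) : Bword b a k ≠ [] :=
    List.ne_nil_of_length_pos ((length_Bword hab k).symm ▸ hseq_pos b k)
  have hsum : Summable fun k =>
      ((w.length + [1].length) / (Bword b a (k + 1)).length : ℝ) := by
    simpa only [div_eq_mul_inv, length_Bword hab] using
      ((summable_nat_add_iff 1).2 (summable_inv_hseq hb)).mul_left _
  simpa only [dfreq_eq_occFreq hab] using
    exists_tendsto_occFreq_of_summable w (V := Bword b a) (s := fun _ => [1]) (fun _ => rfl)
      hne hsum

/-- for any word `w` over `{0,1}`, the densities `d k w` converge as `k → ∞`. -/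
theorem dfreq_converges (b a : ℕ) (hb : 2 ≤ b) (ha1 : 1 ≤ a) (ha2 : a ≤ b - 1)
    (w : List ℕ) (hw : ∀ c ∈ w, c ≤ 1) :
    ∃ L : ℝ, Tendsto (fun k => dfreq b a k w) atTop (𝓝 L) :=
  dfreq_converges_general hb (ha2.trans (Nat.sub_le b 1)) w
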